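/- Let < be a strict total order on A. For every conditional expression P over A there is a unique CL-basic form ⟦P⟧ such that CP_cl ⊢ P = ⟦P⟧, and for all conditional expressions P and Q, CP_cl ⊢ P = Q if and only if ⟦P⟧ = ⟦Q⟧. -/

import Mathlib

/-!
Existence and uniqueness of CL-basic forms rest on two ingredients.

*A three-valued model.* Interpreting atoms in `{true, false, undefined}`, with a conditional
undefined as soon as its middle argument is, satisfies all axioms of CP_cl (`DerCl.ev_eq`). For a
mem-basic form `P` the shared alphabet is determined by this semantics: `a` lies in `sha P` iff `P`
is undefined whenever `a` is (`mem_sha_iff`). Hence semantically equal CL-basic forms have the same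
top word `σ`; as the components `P_i` do not contain the atoms of `σ`, they are again semantically
equal, and the forms coincide by induction (`IsCbf.unique`).

*Normalisation.* CPmem allows every occurrence of `a` below a test of `a` to be resolved, so
mem-basic forms are closed, up to derivability, under the conditional (`exists_mbf`). If
`a ∈ sha P`, then CL2 lifts the test of `a` to the root:
`P = P[a := T] ◁ a ▷ P[a := F]` (`mk_expand`). Lifting all of `sha P` in increasing order and
normalising the components, which have fewer atoms, yields a form `P'` that is CL-basic
because `sha P' = sha P`, the shared alphabet being semantic (`exists_cbf`).
-/

/-- Conditional expressions over a set `A` of atoms: constants T, F, atoms, and the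
ternary conditional `cond P Q R` read `P ◁ Q ▷ R` ("if Q then P else R"). -/
inductive Expr (A : Type) : Type
  | T : Expr A
  | F : Expr A
  | atom : A → Expr A
  | cond : Expr A → Expr A → Expr A → Expr A

namespace Expr

/-- Derivability from the axiom system CP_cl = CP + (CPmem) + (CL2). -/
inductive DerCl {A : Type} : Expr A → Expr A → Prop
  | refl (P : Expr A) : DerCl P P
  | symm {P Q : Expr A} : DerCl P Q → DerCl Q P
  | trans {P Q R : Expr A} : DerCl P Q → DerCl Q R → DerCl P R
  | congr {P P' Q Q' R R' : Expr A} :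
      DerCl P P' → DerCl Q Q' → DerCl R R' →
      DerCl (cond P Q R) (cond P' Q' R')
  | cp1 (x y : Expr A) : DerCl (cond x T y) x
  | cp2 (x y : Expr A) : DerCl (cond x F y) y
  | cp3 (x : Expr A) : DerCl (cond T x F) x
  | cp4 (x y z u v : Expr A) :
      DerCl (cond x (cond y z u) v) (cond (cond x y v) z (cond x u v))
  | cpmem (x y z u v w : Expr A) :
      DerCl (cond x y (cond z u (cond v y w))) (cond x y (cond z u w))
  | cl2 (x y z u v w : Expr A) :
      DerCl (cond (cond x y z) u (cond v y w)) (cond (cond x u v) y (cond z u w))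

/-- The set of atoms occurring in a conditional expression. -/
def atoms {A : Type} [DecidableEq A] : Expr A → Finset A
  | T => ∅
  | F => ∅
  | atom a => {a}
  | cond P Q R => atoms P ∪ atoms Q ∪ atoms R

/-- Mem-basic forms. -/
inductive IsMBF {A : Type} [DecidableEq A] : Expr A → Prop
  | T : IsMBF T
  | F : IsMBF F
  | cond {P Q : Expr A} (a : A) : IsMBF P → IsMBF Q →
      a ∉ atoms P → a ∉ atoms Q → IsMBF (cond P (atom a) Q)

/-- The shared alphabet α̃ of a basic form. -/
def sha {A : Type} [DecidableEq A] : Expr A → Finset A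
  | cond P (atom a) Q => insert a (sha P ∩ sha Q)
  | _ => ∅

/-- `Fseq σ P` is the basic form F_σ(P_0, …, P_{2^{|σ|}−1}):
F_ε(P_0) = P_0 and F_{aρ}(P_0,…) = F_ρ(P_0,…,P_{2^{|ρ|}−1}) ◁ a ▷ F_ρ(P_{2^{|ρ|}},…). -/
def Fseq {A : Type} : (σ : List A) → (Fin (2 ^ σ.length) → Expr A) → Expr A
  | [], P => P ⟨0, by positivity⟩
  | a :: ρ, P =>
      cond (Fseq ρ (fun i => P ⟨i.1, by have := i.2; simp [Nat.pow_succ]; omega⟩))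
        (atom a)
        (Fseq ρ (fun i => P ⟨2 ^ ρ.length + i.1, by have := i.2; simp [Nat.pow_succ]; omega⟩))

/-- CL-basic forms (relative to the ordering of A): T and F are CL-basic forms, and a
mem-basic form P is a CL-basic form if, for σ the enumeration of α̃(P) in increasing
order, P = F_σ(P_0, …, P_{2^{|σ|}−1}) where each P_i is a CL-basic form. -/
inductive IsCbf {A : Type} [LinearOrder A] : Expr A → Prop
  | T : IsCbf T
  | F : IsCbf F
  | node {P : Expr A} (hm : IsMBF P)
      (Ps : Fin (2 ^ ((sha P).sort (· ≤ ·)).length) → Expr A)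
      (hP : P = Fseq ((sha P).sort (· ≤ ·)) Ps)
      (hC : ∀ i, IsCbf (Ps i)) : IsCbf P

end Expr

namespace Expr

variable {A : Type}

/-! ### The three-valued model -/

/-- Three-valued evaluation: `none` is the undefined value, and a conditional is undefined when its
middle argument is. -/
def ev (v : A → Option Bool) : Expr A → Option Bool
  | T => some true
  | F => some false
  | atom a => v a
  | cond P Q R =>
      match ev v Q with
      | none => none
      | some true => ev v P
      | some false => ev v R

theorem DerCl.ev_eq {P Q : Expr A} (h : DerCl P Q) (v : A → Option Bool) : ev v P = ev v Q := by
  induction h with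
  | refl => rfl
  | symm _ ih => exact ih.symm
  | trans _ _ ih₁ ih₂ => exact ih₁.trans ih₂
  | congr _ _ _ ih₁ ih₂ ih₃ => simp only [ev, ih₁, ih₂, ih₃]
  | cp1 | cp2 => simp [ev]
  | cp3 x => rcases h : ev v x with _ | _ | _ <;> simp [ev, h]
  | cp4 x y z u w => rcases h : ev v z with _ | _ | _ <;> simp [ev, h]
  | cpmem x y z u w t =>
    rcases h : ev v y with _ | _ | _ <;> rcases h' : ev v u with _ | _ | _ <;> simp [ev, h, h']
  | cl2 x y z u w t =>
    rcases h : ev v y with _ | _ | _ <;> rcases h' : ev v u with _ | _ | _ <;> simp [ev, h, h']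

section Sem

variable [DecidableEq A]

theorem ev_update {P : Expr A} {a : A} (h : a ∉ atoms P) (v : A → Option Bool) (b : Option Bool) :
    ev (Function.update v a b) P = ev v P := by
  induction P with
  | T | F => rfl
  | atom c =>
    have : c ≠ a := by rintro rfl; simp [atoms] at h
    simp [ev, this]
  | cond P Q R ih₁ ih₂ ih₃ =>
    simp only [atoms, Finset.mem_union, not_or] at h
    simp only [ev, ih₁ h.1.1, ih₂ h.1.2, ih₃ h.2]

theorem ev_none_of_mem_sha {P : Expr A} (hP : IsMBF P) {a : A} (h : a ∈ sha P)
    {v : A → Option Bool} (hv : v a = none) : ev v P = none := by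
  induction hP with
  | T | F => simp [sha] at h
  | cond b _ _ _ _ ih₁ ih₂ =>
    simp only [sha, Finset.mem_insert, Finset.mem_inter] at h
    rcases h with rfl | h
    · simp [ev, hv]
    · rcases hb : v b with _ | _ | _ <;> simp [ev, hb, ih₁ h.1, ih₂ h.2]

/-- A path of `P` avoiding `a` gives a valuation undefined at `a` under which `P` is defined; no
atom is repeated along the path, so its tests can be prescribed independently. -/
theorem exists_ev_of_not_mem_sha {P : Expr A} (hP : IsMBF P) {a : A} (h : a ∉ sha P) :
    ∃ v : A → Option Bool, v a = none ∧ ev v P ≠ none := by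
  induction hP with
  | T | F => exact ⟨fun _ => none, rfl, by simp [ev]⟩
  | cond b _ _ h₁ h₂ ih₁ ih₂ =>
    simp only [sha, Finset.mem_insert, Finset.mem_inter, not_or, not_and_or] at h
    obtain ⟨hab, h | h⟩ := h
    · obtain ⟨v, hv, he⟩ := ih₁ h
      refine ⟨Function.update v b (some true), by simp [hab, hv], ?_⟩
      simpa [ev, ev_update h₁] using he
    · obtain ⟨v, hv, he⟩ := ih₂ h
      refine ⟨Function.update v b (some false), by simp [hab, hv], ?_⟩
      simpa [ev, ev_update h₂] using he

/-- The shared alphabet of a mem-basic form depends only on its three-valued semantics. -/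
theorem mem_sha_iff {P : Expr A} (hP : IsMBF P) {a : A} :
    a ∈ sha P ↔ ∀ v : A → Option Bool, v a = none → ev v P = none := by
  refine ⟨fun h v hv => ev_none_of_mem_sha hP h hv, fun h => ?_⟩
  by_contra hn
  obtain ⟨v, hv, he⟩ := exists_ev_of_not_mem_sha hP hn
  exact he (h v hv)

theorem sha_eq_of_ev_eq {P Q : Expr A} (hP : IsMBF P) (hQ : IsMBF Q)
    (h : ∀ v, ev v P = ev v Q) : sha P = sha Q := by
  ext a
  simp only [mem_sha_iff hP, mem_sha_iff hQ, h]

theorem IsMBF.eq_of_sha_eq_empty {P : Expr A} (hP : IsMBF P) (h : sha P = ∅) :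
    P = Expr.T ∨ P = Expr.F := by
  cases hP with
  | T => exact .inl rfl
  | F => exact .inr rfl
  | cond a _ _ _ _ => simp [sha] at h

theorem IsMBF.sha_subset_atoms {P : Expr A} (hP : IsMBF P) : sha P ⊆ atoms P := by
  induction hP with
  | T | F => simp [sha]
  | cond a _ _ _ _ ih₁ ih₂ =>
    intro b
    simp only [sha, atoms, Finset.mem_insert, Finset.mem_inter, Finset.mem_union,
      Finset.mem_singleton]
    rintro (rfl | h)
    · simp
    · exact .inl (.inl (ih₁ h.1))

end Sem

/-! ### Uniqueness of CL-basic forms -/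

/-- `Layered C σ P` says that `P = F_σ(P_0, …)` for some components `P_i` satisfying `C`, phrased
by recursion on `σ` to avoid the indexing of the components. -/
def Layered (C : Expr A → Prop) : List A → Expr A → Prop
  | [], P => C P
  | a :: ρ, P => ∃ L R, P = cond L (atom a) R ∧ Layered C ρ L ∧ Layered C ρ R

theorem layered_Fseq {C : Expr A → Prop} : ∀ (σ : List A) (Ps : Fin (2 ^ σ.length) → Expr A),
    (∀ i, C (Ps i)) → Layered C σ (Fseq σ Ps)
  | [], _, h => h _
  | _ :: ρ, _, h =>
    ⟨_, _, rfl, layered_Fseq ρ _ fun _ => h _, layered_Fseq ρ _ fun _ => h _⟩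

theorem Layered.exists_Fseq {C : Expr A → Prop} : ∀ {σ : List A} {P : Expr A}, Layered C σ P →
    ∃ Ps : Fin (2 ^ σ.length) → Expr A, P = Fseq σ Ps ∧ ∀ i, C (Ps i)
  | [], P, h => ⟨fun _ => P, rfl, fun _ => h⟩
  | a :: ρ, _, ⟨L, R, hP, hL, hR⟩ => by
    obtain ⟨Ls, rfl, hLs⟩ := hL.exists_Fseq
    obtain ⟨Rs, rfl, hRs⟩ := hR.exists_Fseq
    refine ⟨fun i => if h : i.1 < 2 ^ ρ.length then Ls ⟨i.1, h⟩ else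
      Rs ⟨i.1 - 2 ^ ρ.length, by have := i.2; simp [Nat.pow_succ] at this; omega⟩, ?_, ?_⟩
    · simp [Fseq, hP]
    · intro i
      dsimp only
      split_ifs
      · exact hLs _
      · exact hRs _

theorem Layered.eq_of_ev_eq [DecidableEq A] {C D : Expr A → Prop}
    (hCD : ∀ P Q, C P → D Q → (∀ v, ev v P = ev v Q) → P = Q) :
    ∀ {σ : List A} {P Q : Expr A}, Layered C σ P → Layered D σ Q → IsMBF P → IsMBF Q →
      (∀ v, ev v P = ev v Q) → P = Q
  | [], P, Q, hP, hQ, _, _, h => hCD P Q hP hQ h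
  | a :: ρ, _, _, ⟨L, R, rfl, hL, hR⟩, ⟨L', R', rfl, hL', hR'⟩, hP, hQ, h => by
    obtain _ | _ | ⟨_, mL, mR, aL, aR⟩ := hP
    obtain _ | _ | ⟨_, mL', mR', aL', aR'⟩ := hQ
    have h₁ : L = L' := Layered.eq_of_ev_eq hCD hL hL' mL mL' fun v => by
      simpa [ev, ev_update aL, ev_update aL'] using h (Function.update v a (some true))
    have h₂ : R = R' := Layered.eq_of_ev_eq hCD hR hR' mR mR' fun v => by
      simpa [ev, ev_update aR, ev_update aR'] using h (Function.update v a (some false))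
    rw [h₁, h₂]

section Uniq

variable [LinearOrder A]

theorem IsCbf.isMBF {P : Expr A} (h : IsCbf P) : IsMBF P := by
  cases h with
  | T => exact .T
  | F => exact .F
  | node hm => exact hm

theorem IsCbf.layered {P : Expr A} (h : IsCbf P) :
    Layered IsCbf ((sha P).sort (· ≤ ·)) P := by
  cases h with
  | T => simpa [sha, Layered] using IsCbf.T
  | F => simpa [sha, Layered] using IsCbf.F
  | node hm Ps hP hC =>
    have := layered_Fseq (C := IsCbf) _ Ps hC
    rwa [← hP] at this

theorem isCbf_of_layered {P : Expr A} (hm : IsMBF P)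
    (h : Layered IsCbf ((sha P).sort (· ≤ ·)) P) : IsCbf P := by
  obtain ⟨Ps, hP, hC⟩ := h.exists_Fseq
  exact .node hm Ps hP hC

/-- Semantically equal CL-basic forms are identical. -/
theorem IsCbf.unique {P : Expr A} (hP : IsCbf P) :
    ∀ Q : Expr A, IsCbf Q → (∀ v, ev v P = ev v Q) → P = Q := by
  induction hP with
  | T =>
    intro Q hQ h
    have hs := sha_eq_of_ev_eq .T hQ.isMBF h
    rcases hQ.isMBF.eq_of_sha_eq_empty hs.symm with rfl | rfl
    · rfl
    · simpa [ev] using h fun _ => none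
  | F =>
    intro Q hQ h
    have hs := sha_eq_of_ev_eq .F hQ.isMBF h
    rcases hQ.isMBF.eq_of_sha_eq_empty hs.symm with rfl | rfl
    · simpa [ev] using h fun _ => none
    · rfl
  | @node P hm Ps hP _ ih =>
    intro Q hQ h
    have hl := layered_Fseq (C := fun P => ∀ Q : Expr A, IsCbf Q → (∀ v, ev v P = ev v Q) → P = Q)
      _ Ps ih
    rw [← hP, sha_eq_of_ev_eq hm hQ.isMBF h] at hl
    exact Layered.eq_of_ev_eq (fun P Q hP hQ h => hP Q hQ h) hl hQ.layered hm hQ.isMBF h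

end Uniq

/-! ### The algebra of expressions modulo CP_cl -/

/-- Derivability as a setoid. -/
def derSetoid (A : Type) : Setoid (Expr A) := ⟨DerCl, .refl, .symm, .trans⟩

/-- Expressions modulo derivability in CP_cl; derivations become equational reasoning here. -/
abbrev Cl (A : Type) : Type := Quotient (derSetoid A)

/-- The class of an expression modulo derivability. -/
def mk (P : Expr A) : Cl A := Quotient.mk _ P

theorem mk_eq {P Q : Expr A} : mk P = mk Q ↔ DerCl P Q := Quotient.eq (r := derSetoid A)

/-- The conditional `x ◁ y ▷ z` on classes. -/
def cnd (x y z : Cl A) : Cl A :=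
  Quotient.liftOn₂ x z
    (fun P R => Quotient.liftOn y (fun Q => mk (cond P Q R))
      fun _ _ h => mk_eq.2 (.congr (.refl _) h (.refl _)))
    fun P R P' R' h h' => by
      induction y using Quotient.inductionOn
      exact mk_eq.2 (.congr h (.refl _) h')

theorem mk_cond (P Q R : Expr A) : mk (cond P Q R) = cnd (mk P) (mk Q) (mk R) := rfl

theorem mk_surj (x : Cl A) : ∃ P, mk P = x := Quotient.exists_rep x

theorem cnd_T (x y : Cl A) : cnd x (mk T) y = x := by
  obtain ⟨x, rfl⟩ := mk_surj x
  obtain ⟨y, rfl⟩ := mk_surj y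
  exact mk_eq.2 (.cp1 x y)

theorem cnd_F (x y : Cl A) : cnd x (mk F) y = y := by
  obtain ⟨x, rfl⟩ := mk_surj x
  obtain ⟨y, rfl⟩ := mk_surj y
  exact mk_eq.2 (.cp2 x y)

theorem cnd_TF (x : Cl A) : cnd (mk T) x (mk F) = x := by
  obtain ⟨x, rfl⟩ := mk_surj x
  exact mk_eq.2 (.cp3 x)

theorem cnd_cnd (x y z u v : Cl A) :
    cnd x (cnd y z u) v = cnd (cnd x y v) z (cnd x u v) := by
  obtain ⟨x, rfl⟩ := mk_surj x
  obtain ⟨y, rfl⟩ := mk_surj y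
  obtain ⟨z, rfl⟩ := mk_surj z
  obtain ⟨u, rfl⟩ := mk_surj u
  obtain ⟨v, rfl⟩ := mk_surj v
  exact mk_eq.2 (.cp4 x y z u v)

theorem cnd_mem (x y z u v w : Cl A) :
    cnd x y (cnd z u (cnd v y w)) = cnd x y (cnd z u w) := by
  obtain ⟨x, rfl⟩ := mk_surj x
  obtain ⟨y, rfl⟩ := mk_surj y
  obtain ⟨z, rfl⟩ := mk_surj z
  obtain ⟨u, rfl⟩ := mk_surj u
  obtain ⟨v, rfl⟩ := mk_surj v
  obtain ⟨w, rfl⟩ := mk_surj w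
  exact mk_eq.2 (.cpmem x y z u v w)

theorem cnd_cl2 (x y z u v w : Cl A) :
    cnd (cnd x y z) u (cnd v y w) = cnd (cnd x u v) y (cnd z u w) := by
  obtain ⟨x, rfl⟩ := mk_surj x
  obtain ⟨y, rfl⟩ := mk_surj y
  obtain ⟨z, rfl⟩ := mk_surj z
  obtain ⟨u, rfl⟩ := mk_surj u
  obtain ⟨v, rfl⟩ := mk_surj v
  obtain ⟨w, rfl⟩ := mk_surj w
  exact mk_eq.2 (.cl2 x y z u v w)

theorem cnd_not (x y z : Cl A) : cnd x (cnd (mk F) y (mk T)) z = cnd z y x := by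
  rw [cnd_cnd, cnd_F, cnd_T]

/-- CPmem with the inner test of `y` in the left branch, by negating `u`. -/
theorem cnd_mem_left (x y z u v w : Cl A) :
    cnd x y (cnd (cnd v y w) u z) = cnd x y (cnd w u z) := by
  have := cnd_mem x y z (cnd (mk F) u (mk T)) v w
  rwa [cnd_not, cnd_not] at this

/-- The dual of CPmem, by negating `y`. -/
theorem cnd_mem' (x y z u v w : Cl A) :
    cnd (cnd z u (cnd w y v)) y x = cnd (cnd z u w) y x := by
  have := cnd_mem x (cnd (mk F) y (mk T)) z u v w
  simpa only [cnd_not] using this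

theorem cnd_mem_left' (x y z u v w : Cl A) :
    cnd (cnd (cnd w y v) u z) y x = cnd (cnd w u z) y x := by
  have := cnd_mem_left x (cnd (mk F) y (mk T)) z u v w
  simpa only [cnd_not] using this

theorem cnd_contr (x y v w : Cl A) : cnd x y (cnd v y w) = cnd x y w := by
  have := cnd_mem x y (mk T) (mk F) v w
  rwa [cnd_F, cnd_F] at this

theorem cnd_contr' (x y v w : Cl A) : cnd (cnd w y v) y x = cnd w y x := by
  have := cnd_mem' x y (mk T) (mk F) v w
  rwa [cnd_F, cnd_F] at this

/-! ### Normalisation -/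

section Norm

variable [DecidableEq A]

/-- `restr a b P` is the basic form `P` with all tests of `a` resolved to the truth value `b`. -/
def restr (a : A) (b : Bool) : Expr A → Expr A
  | cond P (atom c) Q =>
      if c = a then (if b then restr a b P else restr a b Q)
      else cond (restr a b P) (atom c) (restr a b Q)
  | P => P

theorem atoms_restr {P : Expr A} (hP : IsMBF P) (a : A) (b : Bool) :
    atoms (restr a b P) ⊆ atoms P \ {a} := by
  induction hP with
  | T | F => simp [restr, atoms]
  | cond c _ _ _ _ ih₁ ih₂ =>
    intro x hx
    simp only [restr] at hx
    have h₁ := @ih₁ x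
    have h₂ := @ih₂ x
    simp only [atoms, Finset.mem_sdiff, Finset.mem_union, Finset.mem_singleton] at h₁ h₂ ⊢
    split_ifs at hx with h h'
    · tauto
    · tauto
    · simp only [atoms, Finset.mem_union, Finset.mem_singleton] at hx
      rcases hx with (hx | rfl) | hx
      · tauto
      · tauto
      · tauto

theorem IsMBF.restr {P : Expr A} (hP : IsMBF P) (a : A) (b : Bool) : IsMBF (restr a b P) := by
  induction hP with
  | T => exact .T
  | F => exact .F
  | cond c m₁ m₂ h₁ h₂ ih₁ ih₂ =>
    simp only [Expr.restr]
    split_ifs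
    · exact ih₁
    · exact ih₂
    · exact .cond c ih₁ ih₂ (fun h => h₁ (Finset.mem_sdiff.1 (atoms_restr m₁ a b h)).1)
        fun h => h₂ (Finset.mem_sdiff.1 (atoms_restr m₂ a b h)).1

theorem mem_sha_restr {P : Expr A} (hP : IsMBF P) {a c : A} (b : Bool) (hc : c ∈ sha P)
    (hca : c ≠ a) : c ∈ sha (restr a b P) := by
  induction hP with
  | T | F => simp [sha] at hc
  | cond d _ _ _ _ ih₁ ih₂ =>
    simp only [sha, Finset.mem_insert, Finset.mem_inter] at hc
    simp only [restr]
    split_ifs with h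
    · exact ih₁ (hc.resolve_left (h ▸ hca)).1
    · exact ih₂ (hc.resolve_left (h ▸ hca)).2
    · simp only [sha, Finset.mem_insert, Finset.mem_inter]
      exact hc.imp_right fun hc => ⟨ih₁ hc.1, ih₂ hc.2⟩

theorem cnd_restr_right {P : Expr A} (hP : IsMBF P) (a : A) (x : Cl A) :
    cnd x (mk (atom a)) (mk P) = cnd x (mk (atom a)) (mk (restr a false P)) := by
  induction hP with
  | T | F => rfl
  | @cond L R c _ _ _ _ ih₁ ih₂ =>
    simp only [restr, Bool.false_eq_true, if_false]
    split_ifs with h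
    · subst h
      rw [mk_cond, cnd_contr, ih₂]
    · rw [mk_cond, mk_cond, ← cnd_mem x _ _ _ x (mk R), ih₂, cnd_mem,
        ← cnd_mem_left x _ _ _ x (mk L), ih₁, cnd_mem_left]

theorem cnd_restr_left {P : Expr A} (hP : IsMBF P) (a : A) (x : Cl A) :
    cnd (mk P) (mk (atom a)) x = cnd (mk (restr a true P)) (mk (atom a)) x := by
  induction hP with
  | T | F => rfl
  | @cond L R c _ _ _ _ ih₁ ih₂ =>
    simp only [restr, if_true]
    split_ifs with h
    · subst h
      rw [mk_cond, cnd_contr', ih₁]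
    · rw [mk_cond, mk_cond, ← cnd_mem' x _ _ _ x (mk R), ih₂, cnd_mem',
        ← cnd_mem_left' x _ _ _ x (mk L), ih₁, cnd_mem_left']

theorem exists_mbf_cond {P Q R : Expr A} (hP : IsMBF P) (hQ : IsMBF Q) (hR : IsMBF R) :
    ∃ S, IsMBF S ∧ mk (cond P Q R) = mk S := by
  induction hQ with
  | T => exact ⟨P, hP, cnd_T (mk P) (mk R)⟩
  | F => exact ⟨R, hR, cnd_F (mk P) (mk R)⟩
  | @cond Q₁ Q₂ a _ _ _ _ ih₁ ih₂ =>
    obtain ⟨L, hL, eL⟩ := ih₁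
    obtain ⟨M, hM, eM⟩ := ih₂
    refine ⟨cond (restr a true L) (atom a) (restr a false M),
      .cond a (hL.restr _ _) (hM.restr _ _) (fun h => ?_) (fun h => ?_), ?_⟩
    · simpa using atoms_restr hL a true h
    · simpa using atoms_restr hM a false h
    · rw [mk_cond, mk_cond, cnd_cnd, ← mk_cond P, ← mk_cond P, eL, eM, cnd_restr_left hL,
        cnd_restr_right hM, mk_cond]

theorem exists_mbf (P : Expr A) : ∃ Q, IsMBF Q ∧ mk P = mk Q := by
  induction P with
  | T => exact ⟨T, .T, rfl⟩
  | F => exact ⟨F, .F, rfl⟩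
  | atom a =>
    exact ⟨cond T (atom a) F, .cond a .T .F (by simp [atoms]) (by simp [atoms]),
      (cnd_TF _).symm⟩
  | cond P Q R ih₁ ih₂ ih₃ =>
    obtain ⟨P', hP, eP⟩ := ih₁
    obtain ⟨Q', hQ, eQ⟩ := ih₂
    obtain ⟨R', hR, eR⟩ := ih₃
    rw [mk_cond, eP, eQ, eR, ← mk_cond]
    exact exists_mbf_cond hP hQ hR

theorem restr_of_not_mem {P : Expr A} (hP : IsMBF P) {a : A} (b : Bool) (h : a ∉ atoms P) :
    restr a b P = P := by
  induction hP with
  | T | F => rfl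
  | cond c _ _ _ _ ih₁ ih₂ =>
    simp only [atoms, Finset.mem_union, Finset.mem_singleton, not_or] at h
    simp [restr, Ne.symm h.1.2, ih₁ h.1.1, ih₂ h.2]

/-- An atom tested on every path of `P` can be tested first; this is where CL2 is used. -/
theorem mk_expand {P : Expr A} (hP : IsMBF P) {a : A} (h : a ∈ sha P) :
    mk P = mk (cond (restr a true P) (atom a) (restr a false P)) := by
  induction hP with
  | T | F => simp [sha] at h
  | @cond L R c mL mR hL hR ih₁ ih₂ =>
    by_cases hc : c = a
    · subst hc
      simp [restr, restr_of_not_mem mL _ hL, restr_of_not_mem mR _ hR]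
    · simp only [sha, Finset.mem_insert, Finset.mem_inter, Ne.symm hc, false_or] at h
      simp only [restr, hc, if_false]
      rw [mk_cond, ih₁ h.1, ih₂ h.2]
      simp only [mk_cond]
      exact cnd_cl2 ..

/-- Lifting the atoms of `σ ⊆ sha P` to the top, given that forms over the remaining atoms `X` can
be replaced by equivalent ones satisfying `C`. -/
theorem exists_layered {C : Expr A → Prop} {X : Finset A}
    (H : ∀ P, IsMBF P → atoms P ⊆ X → ∃ P', C P' ∧ IsMBF P' ∧ mk P = mk P' ∧ atoms P' ⊆ atoms P) :
    ∀ (σ : List A) (P : Expr A), IsMBF P → σ.Nodup → (∀ a ∈ σ, a ∈ sha P) →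
      (∀ a ∈ atoms P, a ∈ X ∨ a ∈ σ) →
      ∃ P', Layered C σ P' ∧ IsMBF P' ∧ mk P = mk P' ∧ atoms P' ⊆ atoms P
  | [], P, hP, _, _, hX => H P hP fun a ha => by simpa using hX a ha
  | a :: ρ, P, hP, hn, hs, hX => by
    obtain ⟨haρ, hn⟩ := List.nodup_cons.1 hn
    have key (b : Bool) : ∃ P', Layered C ρ P' ∧ IsMBF P' ∧ mk (restr a b P) = mk P' ∧
        atoms P' ⊆ atoms (restr a b P) := by
      refine exists_layered H ρ _ (hP.restr a b) hn (fun c hc => ?_) fun c hc => ?_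
      · exact mem_sha_restr hP b (hs c (by simp [hc])) (by rintro rfl; exact haρ hc)
      · have := atoms_restr hP a b hc
        simp only [Finset.mem_sdiff, Finset.mem_singleton] at this
        have h := hX c this.1
        simpa [this.2] using h
    obtain ⟨L, lL, mL, eL, aL⟩ := key true
    obtain ⟨R, lR, mR, eR, aR⟩ := key false
    replace aL := aL.trans (atoms_restr hP a true)
    replace aR := aR.trans (atoms_restr hP a false)
    have ha : a ∈ sha P := hs a (by simp)
    refine ⟨cond L (atom a) R, ⟨L, R, rfl, lL, lR⟩,
      .cond a mL mR (fun h => by simpa using aL h) (fun h => by simpa using aR h), ?_, ?_⟩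
    · rw [mk_expand hP ha, mk_cond, eL, eR, mk_cond]
    · simp only [atoms]
      refine Finset.union_subset (Finset.union_subset (aL.trans Finset.sdiff_subset) ?_)
        (aR.trans Finset.sdiff_subset)
      simpa using hP.sha_subset_atoms ha

end Norm

/-- Every mem-basic form is derivably equal to a CL-basic form over the same atoms, by induction
on the number of atoms. -/
theorem exists_cbf [LinearOrder A] (n : ℕ) : ∀ P : Expr A, IsMBF P → (atoms P).card ≤ n →
    ∃ P', IsCbf P' ∧ mk P = mk P' ∧ atoms P' ⊆ atoms P := by
  induction n using Nat.strong_induction_on with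
  | _ n ih =>
    intro P hP hn
    rcases (sha P).eq_empty_or_nonempty with hs | ⟨a, ha⟩
    · rcases hP.eq_of_sha_eq_empty hs with rfl | rfl
      · exact ⟨T, .T, rfl, subset_rfl⟩
      · exact ⟨F, .F, rfl, subset_rfl⟩
    · have hlt : (atoms P \ sha P).card < n :=
        (Finset.card_lt_card (Finset.sdiff_ssubset hP.sha_subset_atoms ⟨a, ha⟩)).trans_le hn
      obtain ⟨P', hl, hm, he, hs⟩ := exists_layered (C := IsCbf) (X := atoms P \ sha P)
        (fun R mR hR => by
          obtain ⟨R', hc, h⟩ := ih _ hlt R mR (Finset.card_le_card hR)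
          exact ⟨R', hc, hc.isMBF, h⟩)
        ((sha P).sort (· ≤ ·)) P hP (Finset.sort_nodup _ _) (fun a ha => by simpa using ha)
        (fun a ha => by simp only [Finset.mem_sdiff, Finset.mem_sort]; tauto)
      refine ⟨P', isCbf_of_layered hm ?_, he, hs⟩
      -- The components could a priori share further atoms; soundness rules this out.
      rwa [← sha_eq_of_ev_eq hP hm (mk_eq.1 he).ev_eq]

end Expr

open Expr in
/-- For every conditional expression P over A (with A strictly totally
ordered) there is a unique CL-basic form ⟦P⟧ with CP_cl ⊢ P = ⟦P⟧; and for all P, Q,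
CP_cl ⊢ P = Q iff ⟦P⟧ = ⟦Q⟧. -/
theorem stmt_5 {A : Type} [LinearOrder A] :
    ∃ nf : Expr A → Expr A,
      (∀ P : Expr A, (IsCbf (nf P) ∧ DerCl P (nf P)) ∧
        ∀ Q : Expr A, IsCbf Q ∧ DerCl P Q → Q = nf P) ∧
      (∀ P Q : Expr A, DerCl P Q ↔ nf P = nf Q) := by
  have hex (P : Expr A) : ∃ Q, IsCbf Q ∧ DerCl P Q := by
    obtain ⟨M, hM, e⟩ := exists_mbf P
    obtain ⟨Q, hQ, e', _⟩ := exists_cbf _ M hM le_rfl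
    exact ⟨Q, hQ, mk_eq.1 (e.trans e')⟩
  have huniq {P Q : Expr A} (hP : IsCbf P) (hQ : IsCbf Q) (h : DerCl P Q) : P = Q :=
    hP.unique Q hQ h.ev_eq
  choose nf hc hd using hex
  refine ⟨nf, fun P => ⟨⟨hc P, hd P⟩, fun Q hQ => huniq hQ.1 (hc P) (hQ.2.symm.trans (hd P))⟩,
    fun P Q => ⟨fun h => ?_, fun h => ?_⟩⟩
  · exact huniq (hc P) (hc Q) (((hd P).symm.trans h).trans (hd Q))
  · exact (hd P).trans (h ▸ (hd Q).symm)
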